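/- Let 0 ≤ β < 4 and let a, b : ℝ⁴ → ℝ be continuous functions for which there exist constants a₀ > 0 and b₀ > 0 with a(x) ≥ a₀ and b(x) ≥ b₀ for all x ∈ ℝ⁴. Then there exists λ > 0 such that for every smooth function u : ℝ⁴ → ℝ with ‖u‖_E² := ∫_{ℝ⁴}(|Δu|² + a(x)|∇u|² + b(x)u²) dx < ∞, one has λ ∫_{ℝ⁴} u²/|x|^β dx ≤ ‖u‖_E². Consequently the singular eigenvalue λ_β, defined as the infimum of ‖u‖_E² / ∫_{ℝ⁴} u²/|x|^β dx over all such u with u not identically zero, is strictly positive. -/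

import Mathlib

/-!
Away from the origin the weight `|x|^{-β}` is bounded, so only a neighbourhood of `0` matters.
There `u` is replaced by `v = η u`, with `η` a bump function equal to `1` near `0` and supported
in the unit ball, and `β` by `max β 3 = 2p + 2` with `p ∈ (0, 1)`.

The key point is that `w = (|x|² + ε)^{-p}` is smooth and superharmonic in dimension four, with
`Δw ≤ -4p(1-p)(|x|² + ε)^{-p-1}` (`lapl_weight_le`). Green's identity
`∫ v² Δw = ∫ w Δ(v²)` (`integral_green`) and `Δ(v²) = 2vΔv + 2|∇v|² ≥ 2vΔv` give
`4p(1-p) ∫ v² (|x|² + ε)^{-p-1} ≤ 2 ∫ w |v| |Δv|`. Since `w² = (|x|² + ε)^{-2p}` is at most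
`2 (|x|² + ε)^{-p-1}` on the unit ball, Young's inequality absorbs the `v` factor on the left and
leaves `∫ v² (|x|² + ε)^{-p-1} ≤ C ∫ |Δv|²` uniformly in `ε` (`weighted_eps`). Fatou's lemma
removes `ε` (`weighted_limit`), and `|Δ(ηu)|² ≤ C (|Δu|² + |∇u|² + u²)` (`lapl_cutoff_le`)
concludes. No estimate of the full Hessian is needed.
-/

open MeasureTheory Real Filter Topology ENNReal

noncomputable section

/-- Four-dimensional Euclidean space with Lebesgue measure. -/
abbrev R4 : Type := EuclideanSpace ℝ (Fin 4)

/-- The Laplacian of `u : ℝ⁴ → ℝ`, as the sum of the pure second derivatives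
along the coordinate directions. -/
noncomputable def lapl (u : R4 → ℝ) (x : R4) : ℝ :=
  ∑ i : Fin 4, iteratedFDeriv ℝ 2 u x ![EuclideanSpace.single i 1, EuclideanSpace.single i 1]

/-- The squared `E`-norm `∫ (|Δu|² + a|∇u|² + b u²) dx`, as an extended nonnegative real. -/
noncomputable def enorm2 (a b : R4 → ℝ) (u : R4 → ℝ) : ℝ≥0∞ :=
  ∫⁻ x : R4, ENNReal.ofReal ((lapl u x) ^ 2 + a x * ‖gradient u x‖ ^ 2 + b x * (u x) ^ 2)

/-! ### Partial derivatives and the Laplacian -/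

/-- The `i`-th partial derivative of `g : ℝ⁴ → ℝ`. -/
def pd (i : Fin 4) (g : R4 → ℝ) : R4 → ℝ :=
  fun x => fderiv ℝ g x (EuclideanSpace.single i 1)

lemma pd_smooth {g : R4 → ℝ} (hg : ContDiff ℝ (⊤ : ℕ∞) g) (i : Fin 4) :
    ContDiff ℝ (⊤ : ℕ∞) (pd i g) := by
  have h : ContDiff ℝ (⊤ : ℕ∞) (fderiv ℝ g) := hg.fderiv_right (by simp)
  exact h.clm_apply contDiff_const

lemma smooth_diff {g : R4 → ℝ} (hg : ContDiff ℝ (⊤ : ℕ∞) g) : Differentiable ℝ g :=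
  hg.differentiable (by simp)

lemma pd_mul {f g : R4 → ℝ} (hf : Differentiable ℝ f) (hg : Differentiable ℝ g) (i : Fin 4) :
    pd i (fun x => f x * g x) = fun x => f x * pd i g x + pd i f x * g x := by
  funext x
  simp only [pd]
  rw [fderiv_fun_mul (hf x) (hg x)]
  simp [mul_comm]

lemma pd_add {f g : R4 → ℝ} (hf : Differentiable ℝ f) (hg : Differentiable ℝ g) (i : Fin 4) :
    pd i (fun x => f x + g x) = fun x => pd i f x + pd i g x := by
  funext x
  simp only [pd]
  rw [fderiv_fun_add (hf x) (hg x)]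
  simp

lemma lapl_eq {u : R4 → ℝ} (hu : ContDiff ℝ (⊤ : ℕ∞) u) (x : R4) :
    lapl u x = ∑ i, pd i (pd i u) x := by
  unfold lapl
  refine Finset.sum_congr rfl fun i _ => ?_
  rw [iteratedFDeriv_two_apply]
  have h : ContDiff ℝ (⊤ : ℕ∞) (fderiv ℝ u) := hu.fderiv_right (by simp)
  have h2 : DifferentiableAt ℝ (fderiv ℝ u) x := (h.differentiable (by simp)) x
  unfold pd
  rw [fderiv_clm_apply h2 (differentiableAt_const _)]
  simp

lemma lapl_cont {u : R4 → ℝ} (hu : ContDiff ℝ (⊤ : ℕ∞) u) : Continuous (lapl u) := by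
  rw [show lapl u = fun x => ∑ i, pd i (pd i u) x from funext (lapl_eq hu)]
  exact continuous_finsetSum _ fun i _ => (pd_smooth (pd_smooth hu i) i).continuous

lemma grad_sq (u : R4 → ℝ) (x : R4) : ‖gradient u x‖ ^ 2 = ∑ i, pd i u x ^ 2 := by
  rw [EuclideanSpace.real_norm_sq_eq]
  refine Finset.sum_congr rfl fun i _ => ?_
  congr 1
  have h := inner_gradient_left (𝕜 := ℝ) (f := u) (x := x) (y := EuclideanSpace.single i 1)
  simp only [pd]
  rw [← h, EuclideanSpace.inner_single_right]
  simp

lemma lapl_mul {f g : R4 → ℝ} (hf : ContDiff ℝ (⊤ : ℕ∞) f) (hg : ContDiff ℝ (⊤ : ℕ∞) g) (x : R4) :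
    lapl (fun x => f x * g x) x =
      f x * lapl g x + 2 * (∑ i, pd i f x * pd i g x) + lapl f x * g x := by
  rw [lapl_eq (hf.mul hg), lapl_eq hf, lapl_eq hg, Finset.mul_sum, Finset.mul_sum, Finset.sum_mul,
    ← Finset.sum_add_distrib, ← Finset.sum_add_distrib]
  refine Finset.sum_congr rfl fun i _ => ?_
  rw [pd_mul (smooth_diff hf) (smooth_diff hg),
    pd_add (smooth_diff (hf.mul (pd_smooth hg i))) (smooth_diff ((pd_smooth hf i).mul hg)),
    pd_mul (smooth_diff hf) (smooth_diff (pd_smooth hg i)),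
    pd_mul (smooth_diff (pd_smooth hf i)) (smooth_diff hg)]
  ring

/-! ### Integration by parts -/

lemma pd_compact {g : R4 → ℝ} (hg : HasCompactSupport g) (i : Fin 4) :
    HasCompactSupport (pd i g) :=
  hg.fderiv_apply (𝕜 := ℝ) _

lemma integral_pd {f g : R4 → ℝ} (hf : ContDiff ℝ (⊤ : ℕ∞) f) (hg : ContDiff ℝ (⊤ : ℕ∞) g)
    (hc : HasCompactSupport f) (i : Fin 4) :
    ∫ x, f x * pd i g x = - ∫ x, pd i f x * g x := by
  apply integral_mul_fderiv_eq_neg_fderiv_mul_of_integrable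
  · exact ((pd_smooth hf i).continuous.mul hg.continuous).integrable_of_hasCompactSupport
      (pd_compact hc i).mul_right
  · exact (hf.continuous.mul (pd_smooth hg i).continuous).integrable_of_hasCompactSupport
      hc.mul_right
  · exact (hf.continuous.mul hg.continuous).integrable_of_hasCompactSupport hc.mul_right
  · exact fun x _ => smooth_diff hf x
  · exact fun x _ => smooth_diff hg x

/-- Green's identity when one factor has compact support. -/
lemma integral_green {f g : R4 → ℝ} (hf : ContDiff ℝ (⊤ : ℕ∞) f) (hg : ContDiff ℝ (⊤ : ℕ∞) g)
    (hc : HasCompactSupport f) :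
    ∫ x, f x * lapl g x = ∫ x, lapl f x * g x := by
  simp_rw [lapl_eq hf, lapl_eq hg, Finset.mul_sum, Finset.sum_mul]
  rw [integral_finsetSum, integral_finsetSum]
  · refine Finset.sum_congr rfl fun i _ => ?_
    rw [integral_pd hf (pd_smooth hg i) hc, integral_pd (pd_smooth hf i) hg (pd_compact hc i)]
    exact neg_neg _
  · intro i _
    exact ((pd_smooth (pd_smooth hf i) i).continuous.mul
      hg.continuous).integrable_of_hasCompactSupport (pd_compact (pd_compact hc i) i).mul_right
  · intro i _
    exact (hf.continuous.mul
      (pd_smooth (pd_smooth hg i) i).continuous).integrable_of_hasCompactSupport hc.mul_right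

/-! ### The regularised power weight -/

lemma weight_smooth {ε : ℝ} (hε : 0 < ε) (q : ℝ) :
    ContDiff ℝ (⊤ : ℕ∞) (fun x : R4 => (‖x‖ ^ 2 + ε) ^ q) := by
  refine ContDiff.rpow_const_of_ne ((contDiff_norm_sq ℝ).add contDiff_const) fun x => ?_
  positivity

lemma pd_weight {ε : ℝ} (hε : 0 < ε) (q : ℝ) (i : Fin 4) :
    pd i (fun x : R4 => (‖x‖ ^ 2 + ε) ^ q) =
      fun x => (2 * q * x i) * (‖x‖ ^ 2 + ε) ^ (q - 1) := by
  funext x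
  have h1 : HasFDerivAt (fun x : R4 => ‖x‖ ^ 2 + ε) (2 • innerSL ℝ x) x :=
    (hasStrictFDerivAt_norm_sq x).hasFDerivAt.add_const ε
  have h2 := h1.rpow_const (p := q) (Or.inl (by positivity))
  simp only [pd]
  rw [h2.fderiv]
  simp [EuclideanSpace.inner_single_right]
  ring

lemma pd_coord (c : ℝ) (i : Fin 4) : pd i (fun x : R4 => c * x i) = fun _ => c := by
  funext x
  have h : HasFDerivAt (fun x : R4 => c * x i)
      (c • (EuclideanSpace.proj i : R4 →L[ℝ] ℝ)) x :=
    ((EuclideanSpace.proj i : R4 →L[ℝ] ℝ).hasFDerivAt).const_mul c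
  simp only [pd]
  rw [h.fderiv]
  simp

/-- When moreover `p < 1`, this says that the regularised power weight is strictly superharmonic.
The constant `4 p (1 - p)` is specific to dimension four, and its positivity is where `β < 4`
enters. -/
lemma lapl_weight_le {ε : ℝ} (hε : 0 < ε) {p : ℝ} (hp0 : 0 < p) (x : R4) :
    lapl (fun x : R4 => (‖x‖ ^ 2 + ε) ^ (-p)) x
      ≤ -(4 * (p * (1 - p))) * (‖x‖ ^ 2 + ε) ^ (-p - 1) := by
  have hQ : 0 < ‖x‖ ^ 2 + ε := by positivity
  rw [lapl_eq (weight_smooth hε _)]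
  have hd : ∀ i : Fin 4, Differentiable ℝ (fun x : R4 => (2 * -p) * x i) := fun i =>
    ((EuclideanSpace.proj i : R4 →L[ℝ] ℝ).differentiable).const_mul _
  have h : ∀ i, pd i (pd i (fun x : R4 => (‖x‖ ^ 2 + ε) ^ (-p))) x
      = -2 * p * (‖x‖ ^ 2 + ε) ^ (-p - 1)
        + 4 * p * (p + 1) * (‖x‖ ^ 2 + ε) ^ (-p - 1 - 1) * x i ^ 2 := by
    intro i
    rw [pd_weight hε, pd_mul (hd i) (smooth_diff (weight_smooth hε _)), pd_weight hε, pd_coord]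
    ring
  simp_rw [h]
  rw [Finset.sum_add_distrib, ← Finset.mul_sum (f := fun i => x i ^ 2), ← EuclideanSpace.real_norm_sq_eq]
  have h3 : (‖x‖ ^ 2 + ε) ^ (-p - 1) = (‖x‖ ^ 2 + ε) ^ (-p - 1 - 1) * (‖x‖ ^ 2 + ε) := by
    rw [Real.rpow_sub_one hQ.ne' (-p - 1)]
    field_simp
  rw [h3]
  have h4 : 0 < (‖x‖ ^ 2 + ε) ^ (-p - 1 - 1) := Real.rpow_pos_of_pos hQ _
  simp only [Finset.sum_const, Finset.card_univ, Fintype.card_fin, nsmul_eq_mul]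
  have h5 : 0 ≤ 4 * p * (p + 1) * ((‖x‖ ^ 2 + ε) ^ (-p - 1 - 1) * ε) := by positivity
  push_cast
  linarith

/-! ### Weighted inequalities for functions supported in the unit ball -/

/-- Rellich-type inequality for the regularised weight, with a constant independent of `ε`. -/
lemma weighted_eps {p : ℝ} (hp0 : 0 < p) (hp1 : p < 1) {ε : ℝ} (hε : 0 < ε) (hε1 : ε ≤ 1)
    {v : R4 → ℝ} (hv : ContDiff ℝ (⊤ : ℕ∞) v) (hc : HasCompactSupport v)
    (hs : ∀ x, 1 < ‖x‖ → v x = 0) :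
    ∫⁻ x, ENNReal.ofReal (v x ^ 2 * (‖x‖ ^ 2 + ε) ^ (-p - 1))
      ≤ ∫⁻ x, ENNReal.ofReal (1 / (2 * (p * (1 - p)) ^ 2) * lapl v x ^ 2) := by
  set c := p * (1 - p) with hcdef
  have hcpos : 0 < c := mul_pos hp0 (by linarith)
  set f : R4 → ℝ := fun x => (‖x‖ ^ 2 + ε) ^ (-p) with hf
  have hfs : ContDiff ℝ (⊤ : ℕ∞) f := weight_smooth hε _
  have hvv : ContDiff ℝ (⊤ : ℕ∞) (fun x => v x * v x) := hv.mul hv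
  have hcc : HasCompactSupport (fun x => v x * v x) := hc.mul_right
  have hlc : ∀ {g : R4 → ℝ}, ContDiff ℝ (⊤ : ℕ∞) g → HasCompactSupport g →
      HasCompactSupport (lapl g) := by
    intro g hg hgc
    refine HasCompactSupport.intro hgc fun x hx => ?_
    rw [lapl_eq hg]
    refine Finset.sum_eq_zero fun i _ => ?_
    by_contra hne
    refine hx ?_
    have h1 : tsupport (pd i g) ⊆ tsupport g := tsupport_fderiv_apply_subset ℝ _
    have h2 : tsupport (pd i (pd i g)) ⊆ tsupport (pd i g) := tsupport_fderiv_apply_subset ℝ _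
    exact h1 (h2 (subset_tsupport _ hne))
  have I1 : Integrable (fun x => v x * v x * lapl f x) :=
    (hvv.continuous.mul (lapl_cont hfs)).integrable_of_hasCompactSupport hcc.mul_right
  have I2 : Integrable (fun x => lapl (fun x => v x * v x) x * f x) :=
    ((lapl_cont hvv).mul hfs.continuous).integrable_of_hasCompactSupport (hlc hvv hcc).mul_right
  have hc2 : HasCompactSupport (fun x => v x ^ 2) := by
    simp_rw [pow_two]
    exact hcc
  have I3 : Integrable (fun x => v x ^ 2 * (‖x‖ ^ 2 + ε) ^ (-p - 1)) :=
    ((hv.continuous.pow 2).mul (weight_smooth hε _).continuous).integrable_of_hasCompactSupport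
      hc2.mul_right
  have hl2 : HasCompactSupport (fun x => lapl v x ^ 2) := by
    simp_rw [pow_two]
    exact (hlc hv hc).mul_right
  have I4 : Integrable (fun x => 1 / (2 * c ^ 2) * lapl v x ^ 2) :=
    (((lapl_cont hv).pow 2).integrable_of_hasCompactSupport hl2).const_mul _
  have key : ∀ x, 2 * c * (v x ^ 2 * (‖x‖ ^ 2 + ε) ^ (-p - 1))
        - 2 * c * (1 / (2 * c ^ 2) * lapl v x ^ 2)
      ≤ lapl (fun x => v x * v x) x * f x - v x * v x * lapl f x := by
    intro x
    have hQ : 0 < ‖x‖ ^ 2 + ε := by positivity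
    have hw : lapl f x ≤ -(4 * c) * (‖x‖ ^ 2 + ε) ^ (-p - 1) := lapl_weight_le hε hp0 x
    have h1 : 4 * c * (v x ^ 2 * (‖x‖ ^ 2 + ε) ^ (-p - 1)) ≤ - (v x * v x * lapl f x) := by
      nlinarith [mul_le_mul_of_nonneg_left hw (sq_nonneg (v x))]
    have hfx : 0 < f x := Real.rpow_pos_of_pos hQ _
    have hg : 0 ≤ ∑ i, pd i v x * pd i v x := Finset.sum_nonneg fun i _ => mul_self_nonneg _
    have h2 : 2 * (f x * v x) * lapl v x ≤ lapl (fun x => v x * v x) x * f x := by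
      rw [lapl_mul hv hv]
      nlinarith [mul_nonneg hfx.le hg]
    have h3 : f x ^ 2 * v x ^ 2 ≤ 2 * (v x ^ 2 * (‖x‖ ^ 2 + ε) ^ (-p - 1)) := by
      by_cases hx : 1 < ‖x‖
      · simp [hs x hx]
      · have hx1 : ‖x‖ ^ 2 + ε ≤ 2 := by
          have := pow_le_one₀ (n := 2) (norm_nonneg x) (not_lt.mp hx)
          linarith
        have h4 : f x ^ 2 = (‖x‖ ^ 2 + ε) ^ (-p - 1) * (‖x‖ ^ 2 + ε) ^ (1 - p) := by
          simp only [hf]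
          rw [pow_two, ← Real.rpow_add hQ, ← Real.rpow_add hQ]
          congr 1
          ring
        have h5 : (‖x‖ ^ 2 + ε) ^ (1 - p) ≤ 2 :=
          calc (‖x‖ ^ 2 + ε) ^ (1 - p) ≤ 2 ^ (1 - p) :=
                Real.rpow_le_rpow hQ.le hx1 (by linarith)
            _ ≤ 2 ^ (1 : ℝ) := Real.rpow_le_rpow_of_exponent_le (by norm_num) (by linarith)
            _ = 2 := Real.rpow_one _
        have h6 : 0 < (‖x‖ ^ 2 + ε) ^ (-p - 1) := Real.rpow_pos_of_pos hQ _
        rw [h4]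
        nlinarith [mul_le_mul_of_nonneg_left h5 (mul_nonneg h6.le (sq_nonneg (v x)))]
    -- Young's inequality with weight `c`, so that the first term is absorbed by `h1`.
    have h7 : -(c * (f x ^ 2 * v x ^ 2)) - 1 / c * lapl v x ^ 2 ≤ 2 * (f x * v x) * lapl v x := by
      have : 0 ≤ 1 / c * (c * (f x * v x) + lapl v x) ^ 2 := by positivity
      have e : 1 / c * (c * (f x * v x) + lapl v x) ^ 2 = c * (f x ^ 2 * v x ^ 2)
          + 2 * (f x * v x) * lapl v x + 1 / c * lapl v x ^ 2 := by
        field_simp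
        ring
      linarith
    have h8 : 2 * c * (1 / (2 * c ^ 2) * lapl v x ^ 2) = 1 / c * lapl v x ^ 2 := by
      field_simp
    rw [h8]
    nlinarith [mul_le_mul_of_nonneg_left h3 hcpos.le]
  have hint := integral_mono ((I3.const_mul (2 * c)).sub (I4.const_mul (2 * c))) (I2.sub I1) key
  rw [integral_sub' I2 I1, integral_sub' (I3.const_mul _) (I4.const_mul _),
    integral_green hvv hfs hcc, sub_self, integral_const_mul, integral_const_mul] at hint
  have hfin : ∫ x, v x ^ 2 * (‖x‖ ^ 2 + ε) ^ (-p - 1) ≤ ∫ x, 1 / (2 * c ^ 2) * lapl v x ^ 2 := by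
    have : 0 < 2 * c := by positivity
    nlinarith
  rw [← ofReal_integral_eq_lintegral_ofReal I3 (ae_of_all _ fun x => by positivity),
    ← ofReal_integral_eq_lintegral_ofReal I4 (ae_of_all _ fun x => by positivity)]
  exact ENNReal.ofReal_le_ofReal hfin

lemma ae_ne_zero : ∀ᵐ x : R4, x ≠ 0 := by
  simp [ae_iff]

/-- Rellich-type inequality for the singular weight, the limit `ε → 0` of `weighted_eps`. -/
lemma weighted_limit {p : ℝ} (hp0 : 0 < p) (hp1 : p < 1)
    {v : R4 → ℝ} (hv : ContDiff ℝ (⊤ : ℕ∞) v) (hc : HasCompactSupport v)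
    (hs : ∀ x, 1 < ‖x‖ → v x = 0) :
    ∫⁻ x, ENNReal.ofReal (v x ^ 2 / ‖x‖ ^ (2 * p + 2))
      ≤ ∫⁻ x, ENNReal.ofReal (1 / (2 * (p * (1 - p)) ^ 2) * lapl v x ^ 2) := by
  set F : ℕ → R4 → ℝ≥0∞ := fun n x =>
    ENNReal.ofReal (v x ^ 2 * (‖x‖ ^ 2 + 1 / ((n : ℝ) + 1)) ^ (-p - 1)) with hF
  have hpos : ∀ n : ℕ, (0 : ℝ) < 1 / ((n : ℝ) + 1) := fun n => by positivity
  have hle : ∀ n : ℕ, 1 / ((n : ℝ) + 1) ≤ 1 := fun n => by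
    rw [div_le_one (by positivity)]
    linarith [Nat.cast_nonneg (α := ℝ) n]
  have hlim : ∀ᵐ x : R4, ENNReal.ofReal (v x ^ 2 / ‖x‖ ^ (2 * p + 2))
      = liminf (fun n => F n x) atTop := by
    filter_upwards [ae_ne_zero] with x hx
    have hx0 : 0 < ‖x‖ := norm_pos_iff.mpr hx
    have e : v x ^ 2 / ‖x‖ ^ (2 * p + 2) = v x ^ 2 * (‖x‖ ^ 2 + 0) ^ (-p - 1) := by
      rw [add_zero, ← Real.rpow_natCast ‖x‖ 2, ← Real.rpow_mul hx0.le, div_eq_mul_inv,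
        ← Real.rpow_neg hx0.le]
      congr 2
      push_cast
      ring
    rw [e]
    refine (Tendsto.liminf_eq ?_).symm
    refine (ENNReal.continuous_ofReal.tendsto _).comp ?_
    refine Tendsto.const_mul _ ?_
    refine Tendsto.rpow_const ?_ (Or.inl (by positivity))
    exact tendsto_one_div_add_atTop_nhds_zero_nat.const_add _
  rw [lintegral_congr_ae hlim]
  refine (lintegral_liminf_le fun n => ?_).trans ?_
  · exact ((hv.continuous.pow 2).mul
      (weight_smooth (hpos n) _).continuous).measurable.ennreal_ofReal
  · refine liminf_le_of_frequently_le' (Frequently.of_forall fun n => ?_)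
    exact weighted_eps hp0 hp1 (hpos n) (hle n) hv hc hs

/-! ### Cutting off near the origin -/

/-- The cutoff only costs lower-order terms. -/
lemma lapl_cutoff_le {η : R4 → ℝ} (hη : ContDiff ℝ (⊤ : ℕ∞) η) (hc : HasCompactSupport η) :
    ∃ K : ℝ, 0 < K ∧ ∀ u : R4 → ℝ, ContDiff ℝ (⊤ : ℕ∞) u → ∀ x,
      lapl (fun x => η x * u x) x ^ 2 ≤ K * (lapl u x ^ 2 + ‖gradient u x‖ ^ 2 + u x ^ 2) := by
  obtain ⟨A, hA⟩ := hc.exists_bound_of_continuous hη.continuous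
  have hg : ∃ B : ℝ, ∀ x, ‖∑ i, pd i η x ^ 2‖ ≤ B := by
    have hB : ∀ i, ∃ B : ℝ, ∀ x, ‖pd i η x‖ ≤ B := fun i =>
      (pd_compact hc i).exists_bound_of_continuous (pd_smooth hη i).continuous
    choose B hB using hB
    refine ⟨∑ i, B i ^ 2, fun x => ?_⟩
    rw [Real.norm_of_nonneg (Finset.sum_nonneg fun i _ => sq_nonneg _)]
    refine Finset.sum_le_sum fun i _ => ?_
    rw [← sq_abs, ← Real.norm_eq_abs]
    exact pow_le_pow_left₀ (norm_nonneg _) (hB i x) 2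
  obtain ⟨B, hB⟩ := hg
  have hD : ∃ D : ℝ, ∀ x, ‖lapl η x‖ ≤ D := by
    have hD : ∀ i, ∃ D : ℝ, ∀ x, ‖pd i (pd i η) x‖ ≤ D := fun i =>
      (pd_compact (pd_compact hc i) i).exists_bound_of_continuous
        (pd_smooth (pd_smooth hη i) i).continuous
    choose D hD using hD
    refine ⟨∑ i, D i, fun x => ?_⟩
    rw [lapl_eq hη]
    exact (norm_sum_le _ _).trans (Finset.sum_le_sum fun i _ => hD i x)
  obtain ⟨D, hD⟩ := hD
  have hB0 : 0 ≤ B := (norm_nonneg _).trans (hB 0)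
  refine ⟨3 * A ^ 2 + 12 * B + 3 * D ^ 2 + 1, by positivity, fun u hu x => ?_⟩
  rw [lapl_mul hη hu, grad_sq]
  set L := lapl u x
  set S := ∑ i, pd i u x ^ 2 with hS
  set T := ∑ i, pd i η x * pd i u x with hT
  have hS0 : 0 ≤ S := Finset.sum_nonneg fun i _ => sq_nonneg _
  have hCS : T ^ 2 ≤ B * S := by
    refine (Finset.sum_mul_sq_le_sq_mul_sq _ _ _).trans ?_
    exact mul_le_mul_of_nonneg_right ((le_abs_self _).trans (hB x)) hS0
  have hA2 : η x ^ 2 ≤ A ^ 2 := by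
    rw [← sq_abs (η x)]
    exact pow_le_pow_left₀ (abs_nonneg _) (hA x) 2
  have hD2 : lapl η x ^ 2 ≤ D ^ 2 := by
    rw [← sq_abs (lapl η x)]
    exact pow_le_pow_left₀ (abs_nonneg _) (hD x) 2
  have h3 : (η x * L + 2 * T + lapl η x * u x) ^ 2
      ≤ 3 * (η x ^ 2 * L ^ 2) + 12 * T ^ 2 + 3 * (lapl η x ^ 2 * u x ^ 2) := by
    nlinarith [sq_nonneg (η x * L - 2 * T), sq_nonneg (η x * L - lapl η x * u x),
      sq_nonneg (2 * T - lapl η x * u x)]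
  have h4 := mul_le_mul_of_nonneg_right hA2 (sq_nonneg L)
  have h5 := mul_le_mul_of_nonneg_right hD2 (sq_nonneg (u x))
  have n1 : 0 ≤ A ^ 2 * (S + u x ^ 2) := by positivity
  have n2 : 0 ≤ B * (L ^ 2 + u x ^ 2) := by positivity
  have n3 : 0 ≤ D ^ 2 * (L ^ 2 + S) := by positivity
  have n4 : 0 ≤ L ^ 2 + S + u x ^ 2 := by positivity
  nlinarith

/-- Positivity of the singular eigenvalue `λ_β`: under `(A₁)` there is `λ > 0` with
`λ ∫ u²/|x|^β dx ≤ ‖u‖_E²` for every smooth `u` of finite `E`-norm; consequently the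
infimum `λ_β` of the Rayleigh quotients is strictly positive. -/
theorem stmt_7 (β : ℝ) (hβ0 : 0 ≤ β) (hβ4 : β < 4) (a b : R4 → ℝ) (ha : Continuous a) (hb : Continuous b)
    (a₀ b₀ : ℝ) (ha₀ : 0 < a₀) (hb₀ : 0 < b₀)
    (haa : ∀ x, a₀ ≤ a x) (hbb : ∀ x, b₀ ≤ b x) :
    ∃ lam : ℝ, 0 < lam ∧ ∀ u : R4 → ℝ, ContDiff ℝ (⊤ : ℕ∞) u → enorm2 a b u < ⊤ →
      ENNReal.ofReal lam * (∫⁻ x : R4, ENNReal.ofReal ((u x) ^ 2 / ‖x‖ ^ β))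
        ≤ enorm2 a b u := by
  let η : ContDiffBump (0 : R4) := ⟨1 / 2, 1, by norm_num, by norm_num⟩
  have hηs : ContDiff ℝ (⊤ : ℕ∞) (η : R4 → ℝ) := η.contDiff
  obtain ⟨K, hK0, hK⟩ := lapl_cutoff_le hηs η.hasCompactSupport
  -- Raising the exponent to at least `3` keeps `p` strictly between `0` and `1`.
  set p : ℝ := max β 3 / 2 - 1 with hp
  have hp0 : 0 < p := by
    have := le_max_right β 3
    linarith
  have hp1 : p < 1 := by
    have : max β 3 < 4 := max_lt hβ4 (by norm_num)
    linarith
  have hβp : β ≤ 2 * p + 2 := by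
    have := le_max_left β 3
    linarith
  set K₁ : ℝ := 1 / (2 * (p * (1 - p)) ^ 2) with hK₁
  have hK₁0 : 0 < K₁ := by
    have : 0 < 1 - p := by linarith
    positivity
  set m : ℝ := min 1 (min a₀ b₀) with hm
  have hm0 : 0 < m := lt_min one_pos (lt_min ha₀ hb₀)
  have hm1 : m ≤ 1 := min_le_left _ _
  have hma : m ≤ a₀ := (min_le_right _ _).trans (min_le_left _ _)
  have hmb : m ≤ b₀ := (min_le_right _ _).trans (min_le_right _ _)
  set C : ℝ := (K₁ * K + 16) / m with hC
  have hC0 : 0 < C := by positivity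
  refine ⟨1 / C, by positivity, fun u hu _ => ?_⟩
  have hv : ContDiff ℝ (⊤ : ℕ∞) (fun x => η x * u x) := hηs.mul hu
  have hvc : HasCompactSupport (fun x => η x * u x) := η.hasCompactSupport.mul_right
  have hvs : ∀ x, 1 < ‖x‖ → η x * u x = 0 := by
    intro x hx
    rw [η.zero_of_le_dist (by simpa [η] using hx.le), zero_mul]
  have hsplit : ∀ᵐ x : R4, ENNReal.ofReal (u x ^ 2 / ‖x‖ ^ β)
      ≤ ENNReal.ofReal ((η x * u x) ^ 2 / ‖x‖ ^ (2 * p + 2)) + ENNReal.ofReal (16 * u x ^ 2) := by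
    filter_upwards [ae_ne_zero] with x hx
    have hx0 : 0 < ‖x‖ := norm_pos_iff.mpr hx
    by_cases h : ‖x‖ ≤ 1 / 2
    · refine le_add_right (ENNReal.ofReal_le_ofReal ?_)
      rw [η.one_of_mem_closedBall (by simpa [η] using h), one_mul]
      refine div_le_div_of_nonneg_left (sq_nonneg _) (Real.rpow_pos_of_pos hx0 _) ?_
      exact Real.rpow_le_rpow_of_exponent_ge hx0 (by linarith) hβp
    · refine le_add_left (ENNReal.ofReal_le_ofReal ?_)
      have h1 : (1 / 16 : ℝ) ≤ ‖x‖ ^ β :=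
        calc (1 / 16 : ℝ) = (1 / 2) ^ (4 : ℝ) := by norm_num
          _ ≤ (1 / 2) ^ β :=
            Real.rpow_le_rpow_of_exponent_ge (by norm_num) (by norm_num) hβ4.le
          _ ≤ ‖x‖ ^ β := Real.rpow_le_rpow (by norm_num) (not_le.mp h).le hβ0
      rw [div_le_iff₀ (by linarith)]
      nlinarith [mul_le_mul_of_nonneg_left h1 (sq_nonneg (u x))]
  have hmain : ∫⁻ x : R4, ENNReal.ofReal (u x ^ 2 / ‖x‖ ^ β)
      ≤ ENNReal.ofReal C * enorm2 a b u := by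
    calc ∫⁻ x : R4, ENNReal.ofReal (u x ^ 2 / ‖x‖ ^ β)
        ≤ ∫⁻ x : R4, (ENNReal.ofReal ((η x * u x) ^ 2 / ‖x‖ ^ (2 * p + 2))
            + ENNReal.ofReal (16 * u x ^ 2)) := lintegral_mono_ae hsplit
      _ = (∫⁻ x : R4, ENNReal.ofReal ((η x * u x) ^ 2 / ‖x‖ ^ (2 * p + 2)))
            + ∫⁻ x : R4, ENNReal.ofReal (16 * u x ^ 2) :=
          lintegral_add_right _
            ((hu.continuous.pow 2).const_smul (16 : ℝ)).measurable.ennreal_ofReal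
      _ ≤ (∫⁻ x : R4, ENNReal.ofReal (K₁ * lapl (fun x => η x * u x) x ^ 2))
            + ∫⁻ x : R4, ENNReal.ofReal (16 * u x ^ 2) := by
          gcongr ?_ + _
          exact weighted_limit hp0 hp1 hv hvc hvs
      _ = ∫⁻ x : R4, (ENNReal.ofReal (K₁ * lapl (fun x => η x * u x) x ^ 2)
            + ENNReal.ofReal (16 * u x ^ 2)) :=
          (lintegral_add_right _
            ((hu.continuous.pow 2).const_smul (16 : ℝ)).measurable.ennreal_ofReal).symm
      _ ≤ ∫⁻ x : R4, ENNReal.ofReal C * ENNReal.ofReal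
            ((lapl u x) ^ 2 + a x * ‖gradient u x‖ ^ 2 + b x * (u x) ^ 2) := by
          refine lintegral_mono fun x => ?_
          rw [← ENNReal.ofReal_add (by positivity) (by positivity),
            ← ENNReal.ofReal_mul hC0.le]
          refine ENNReal.ofReal_le_ofReal ?_
          set N := lapl u x ^ 2 + ‖gradient u x‖ ^ 2 + u x ^ 2 with hN
          have h1 := mul_le_mul_of_nonneg_left (hK u hu x) hK₁0.le
          have h2 : u x ^ 2 ≤ N := by
            have : 0 ≤ lapl u x ^ 2 + ‖gradient u x‖ ^ 2 := by positivity
            linarith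
          have h3 : m * N ≤ (lapl u x) ^ 2 + a x * ‖gradient u x‖ ^ 2 + b x * (u x) ^ 2 := by
            have e1 := mul_le_mul_of_nonneg_right hm1 (sq_nonneg (lapl u x))
            have e2 := mul_le_mul_of_nonneg_right (hma.trans (haa x)) (sq_nonneg ‖gradient u x‖)
            have e3 := mul_le_mul_of_nonneg_right (hmb.trans (hbb x)) (sq_nonneg (u x))
            rw [hN]
            linarith
          have h4 : C * (m * N) = K₁ * (K * N) + 16 * N := by
            rw [hC]
            field_simp
          have h5 := mul_le_mul_of_nonneg_left h3 hC0.le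
          linarith
      _ = ENNReal.ofReal C * enorm2 a b u := by
          rw [lintegral_const_mul' _ _ ENNReal.ofReal_ne_top]
          rfl
  calc ENNReal.ofReal (1 / C) * (∫⁻ x : R4, ENNReal.ofReal ((u x) ^ 2 / ‖x‖ ^ β))
      ≤ ENNReal.ofReal (1 / C) * (ENNReal.ofReal C * enorm2 a b u) := by gcongr
    _ = enorm2 a b u := by
        rw [← mul_assoc, ← ENNReal.ofReal_mul (by positivity), one_div_mul_cancel hC0.ne',
          ENNReal.ofReal_one, one_mul]
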